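/- Let S ⊆ I1 with |S| = k (0 ≤ k < K) and set v = Σ_{l∈I1∖S} A_l x̃_l. Then max_{l∈I1} ‖A_l^T v‖_2 ≥ (1 − (d−1)ν − (K−k−1)dμ_B) · max_{l∈I1∖S} ‖x̃_l‖_2. -/

import Mathlib

/- Setting: a measurement matrix `A ∈ ℝ^{m×n}` with `n = L·d`, partitioned into `L` column
blocks of size `m×d`; columns are indexed by pairs `(l, j)` (block `l`, position `j`). -/

noncomputable section

open Finset Matrix

/-- Euclidean (ℓ₂) norm of a finitely indexed real vector. -/
def e2norm {ι : Type*} [Fintype ι] (v : ι → ℝ) : ℝ := Real.sqrt (∑ i, v i ^ 2)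

/-- Euclidean inner (dot) product of two real vectors. -/
def dotp {ι : Type*} [Fintype ι] (u v : ι → ℝ) : ℝ := ∑ i, u i * v i

/-- The `(l, j)` column of the block matrix `A` (block `l`, position `j` inside the block). -/
def acol {m L d : ℕ} (A : Matrix (Fin m) (Fin L × Fin d) ℝ) (l : Fin L) (j : Fin d) :
    Fin m → ℝ :=
  fun i => A i (l, j)

/-- `A_lᵀ v` : correlation of the `l`-th block of `A` with a vector `v ∈ ℝ^m`. -/
def blkT {m L d : ℕ} (A : Matrix (Fin m) (Fin L × Fin d) ℝ) (l : Fin L) (v : Fin m → ℝ) :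
    Fin d → ℝ :=
  fun j => dotp (acol A l j) v

/-- Spectral norm (largest singular value) `ρ(X)` of a real matrix, as the supremum of
`‖Xu‖₂ / ‖u‖₂` over nonzero `u`. -/
def specNorm {p q : ℕ} (X : Matrix (Fin p) (Fin q) ℝ) : ℝ :=
  ⨆ u : {u : Fin q → ℝ // u ≠ 0}, e2norm (X *ᵥ u.1) / e2norm u.1

/-- The `d × d` cross-Gram matrix `A_iᵀ A_j` of two blocks of `A`. -/
def bgram {m L d : ℕ} (A : Matrix (Fin m) (Fin L × Fin d) ℝ) (i j : Fin L) :
    Matrix (Fin d) (Fin d) ℝ :=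
  fun a b => dotp (acol A i a) (acol A j b)

/-- Block-coherence `μ_B = max_{i ≠ j} (1/d) ρ(A_iᵀ A_j)`. -/
def blockCoh {m L d : ℕ} (A : Matrix (Fin m) (Fin L × Fin d) ℝ) : ℝ :=
  ⨆ p : {p : Fin L × Fin L // p.1 ≠ p.2},
    (1 / (d : ℝ)) * specNorm (bgram A p.1.1 p.1.2)

/-- Sub-coherence `ν`: the maximum of `|a_iᵀ a_j|` over pairs of distinct columns lying in the
same block of `A`. -/
def subCoh {m L d : ℕ} (A : Matrix (Fin m) (Fin L × Fin d) ℝ) : ℝ :=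
  ⨆ t : {t : Fin L × Fin d × Fin d // t.2.1 ≠ t.2.2},
    |dotp (acol A t.1.1 t.1.2.1) (acol A t.1.1 t.1.2.2)|

/-!
Write `G = A_lᵀ A_l` for a block `l` at which `‖x_l‖` is largest. Expanding `v` gives
`x_l = A_lᵀ v - (G - 1) x_l - ∑_{l' ≠ l} A_lᵀ A_l' x_l'`. The columns are unit vectors, so `G - 1`
has zero diagonal and off-diagonal entries at most `ν`, whence `‖(G - 1) x_l‖ ≤ (d - 1) ν ‖x_l‖` by
Cauchy-Schwarz in each row. Each cross term is at most `d μ_B ‖x_l'‖ ≤ d μ_B ‖x_l‖`, so the bound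
is the triangle inequality.
-/

section EuclideanNorm

variable {ι κ : Type*} [Fintype ι]

lemma e2norm_eq_norm_toLp (v : ι → ℝ) : e2norm v = ‖WithLp.toLp 2 v‖ := by
  simp only [e2norm, EuclideanSpace.norm_eq, Real.norm_eq_abs, sq_abs]

lemma e2norm_nonneg (v : ι → ℝ) : 0 ≤ e2norm v :=
  Real.sqrt_nonneg _

lemma e2norm_sq (v : ι → ℝ) : e2norm v ^ 2 = ∑ i, v i ^ 2 :=
  Real.sq_sqrt (sum_nonneg fun _ _ ↦ sq_nonneg _)

lemma e2norm_pos {v : ι → ℝ} (hv : v ≠ 0) : 0 < e2norm v := by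
  rw [e2norm_eq_norm_toLp]
  exact norm_pos_iff.2 (by simpa using hv)

lemma e2norm_sub_le (u v : ι → ℝ) : e2norm (u - v) ≤ e2norm u + e2norm v := by
  simpa only [e2norm_eq_norm_toLp, WithLp.toLp_sub] using norm_sub_le _ _

lemma e2norm_sum_le (s : Finset κ) (f : κ → ι → ℝ) :
    e2norm (∑ k ∈ s, f k) ≤ ∑ k ∈ s, e2norm (f k) := by
  simpa only [e2norm_eq_norm_toLp, WithLp.toLp_sum] using norm_sum_le _ _

lemma sq_mulVec_apply_le_of_diag_eq_zero [DecidableEq ι] {E : Matrix ι ι ℝ} {ν : ℝ} {a : ι}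
    (hdiag : E a a = 0) (hoff : ∀ b, a ≠ b → |E a b| ≤ ν) (x : ι → ℝ) :
    (E *ᵥ x) a ^ 2 ≤ (Fintype.card ι - 1) * ν ^ 2 * ∑ b ∈ univ.erase a, x b ^ 2 := by
  have hentry : ∀ b ∈ univ.erase a, E a b ^ 2 ≤ ν ^ 2 := fun b hb ↦
    sq_le_sq.2 ((hoff b (ne_of_mem_erase hb).symm).trans (le_abs_self ν))
  calc
    (E *ᵥ x) a ^ 2 = (∑ b ∈ univ.erase a, E a b * x b) ^ 2 := by
      rw [mulVec, dotProduct, ← add_sum_erase _ _ (mem_univ a), hdiag, zero_mul, zero_add]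
    _ ≤ (∑ b ∈ univ.erase a, E a b ^ 2) * ∑ b ∈ univ.erase a, x b ^ 2 :=
      sum_mul_sq_le_sq_mul_sq _ _ _
    _ ≤ (∑ _ ∈ univ.erase a, ν ^ 2) * ∑ b ∈ univ.erase a, x b ^ 2 :=
      mul_le_mul_of_nonneg_right (sum_le_sum hentry) (sum_nonneg fun _ _ ↦ sq_nonneg _)
    _ = (Fintype.card ι - 1) * ν ^ 2 * ∑ b ∈ univ.erase a, x b ^ 2 := by
      rw [sum_const, nsmul_eq_mul, cast_card_erase_of_mem (mem_univ a), card_univ]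

lemma e2norm_mulVec_le_of_diag_eq_zero [Nonempty ι] {E : Matrix ι ι ℝ} {ν : ℝ}
    (hν : 0 ≤ ν) (hdiag : ∀ a, E a a = 0) (hoff : ∀ a b, a ≠ b → |E a b| ≤ ν) (x : ι → ℝ) :
    e2norm (E *ᵥ x) ≤ (Fintype.card ι - 1) * ν * e2norm x := by
  classical
  have hcard : (0 : ℝ) ≤ Fintype.card ι - 1 :=
    sub_nonneg.2 (Nat.one_le_cast.2 Fintype.card_pos)
  have hcount : ∑ a, ∑ b ∈ univ.erase a, x b ^ 2 = (Fintype.card ι - 1) * e2norm x ^ 2 := by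
    simp only [sum_erase_eq_sub (mem_univ _), sum_sub_distrib, ← e2norm_sq, sum_const, card_univ,
      nsmul_eq_mul, sub_one_mul]
  refine le_of_sq_le_sq ?_ (mul_nonneg (mul_nonneg hcard hν) (e2norm_nonneg x))
  calc
    e2norm (E *ᵥ x) ^ 2 = ∑ a, (E *ᵥ x) a ^ 2 := e2norm_sq _
    _ ≤ ∑ a, (Fintype.card ι - 1) * ν ^ 2 * ∑ b ∈ univ.erase a, x b ^ 2 :=
      sum_le_sum fun a _ ↦ sq_mulVec_apply_le_of_diag_eq_zero (hdiag a) (hoff a) x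
    _ = ((Fintype.card ι - 1) * ν * e2norm x) ^ 2 := by
      rw [← mul_sum, hcount]
      ring

end EuclideanNorm

section SpectralNorm

variable {p q : ℕ} (X : Matrix (Fin p) (Fin q) ℝ)

lemma specNorm_nonneg : 0 ≤ specNorm X :=
  Real.iSup_nonneg fun _ ↦ div_nonneg (e2norm_nonneg _) (e2norm_nonneg _)

open scoped Matrix.Norms.L2Operator in
lemma bddAbove_range_e2norm_mulVec_div :
    BddAbove (Set.range fun u : {u : Fin q → ℝ // u ≠ 0} ↦ e2norm (X *ᵥ u.1) / e2norm u.1) := by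
  refine ⟨‖X‖, Set.forall_mem_range.2 fun u ↦ (div_le_iff₀ (e2norm_pos u.2)).2 ?_⟩
  rw [e2norm_eq_norm_toLp, e2norm_eq_norm_toLp]
  exact l2_opNorm_mulVec X (WithLp.toLp 2 u.1)

lemma e2norm_mulVec_le_specNorm_mul (u : Fin q → ℝ) :
    e2norm (X *ᵥ u) ≤ specNorm X * e2norm u := by
  rcases eq_or_ne u 0 with rfl | hu
  · simp [e2norm]
  · exact (div_le_iff₀ (e2norm_pos hu)).1
      (le_ciSup (bddAbove_range_e2norm_mulVec_div X) ⟨u, hu⟩)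

end SpectralNorm

section BlockMatrix

variable {m L d : ℕ} (A : Matrix (Fin m) (Fin L × Fin d) ℝ)

/-- The column block `A_l` of `A`, an `m × d` matrix; it turns `blkT` and `bgram` into the matrix
products `A_lᵀ v` and `A_iᵀ A_j`. -/
def colBlock (l : Fin L) : Matrix (Fin m) (Fin d) ℝ :=
  A.submatrix id (Prod.mk l)

lemma blkT_eq_transpose_colBlock_mulVec (l : Fin L) (v : Fin m → ℝ) :
    blkT A l v = (colBlock A l)ᵀ *ᵥ v :=
  rfl

lemma bgram_eq_transpose_colBlock_mul (i j : Fin L) :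
    bgram A i j = (colBlock A i)ᵀ * colBlock A j :=
  rfl

lemma blkT_sum_colBlock_mulVec (J : Finset (Fin L)) (x : Fin L → Fin d → ℝ) (l : Fin L) :
    blkT A l (∑ l' ∈ J, colBlock A l' *ᵥ x l') = ∑ l' ∈ J, bgram A l l' *ᵥ x l' := by
  simp only [blkT_eq_transpose_colBlock_mulVec, bgram_eq_transpose_colBlock_mul, mulVec_sum,
    mulVec_mulVec]

lemma sum_colBlock_mulVec (J : Finset (Fin L)) (x : Fin L → Fin d → ℝ) :
    ∑ l ∈ J, colBlock A l *ᵥ x l = fun i ↦ ∑ l ∈ J, ∑ j, A i (l, j) * x l j := by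
  ext i
  exact sum_apply i J _

lemma bgram_self_apply_self (l : Fin L) (a : Fin d) :
    bgram A l l a a = e2norm (acol A l a) ^ 2 := by
  simp only [e2norm_sq, bgram, dotp, sq (acol A l a _)]

lemma subCoh_nonneg : 0 ≤ subCoh A :=
  Real.iSup_nonneg fun _ ↦ abs_nonneg _

lemma abs_bgram_self_le_subCoh (l : Fin L) {a b : Fin d} (hab : a ≠ b) :
    |bgram A l l a b| ≤ subCoh A :=
  Finite.le_ciSup (fun t : {t : Fin L × Fin d × Fin d // t.2.1 ≠ t.2.2} ↦
    |bgram A t.1.1 t.1.1 t.1.2.1 t.1.2.2|) ⟨(l, a, b), hab⟩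

lemma blockCoh_nonneg : 0 ≤ blockCoh A :=
  Real.iSup_nonneg fun _ ↦ mul_nonneg (by positivity) (specNorm_nonneg _)

lemma specNorm_bgram_le_mul_blockCoh (hd : 0 < d) {i j : Fin L} (hij : i ≠ j) :
    specNorm (bgram A i j) ≤ d * blockCoh A := by
  have hle : 1 / (d : ℝ) * specNorm (bgram A i j) ≤ blockCoh A :=
    Finite.le_ciSup (fun p : {p : Fin L × Fin L // p.1 ≠ p.2} ↦
      1 / (d : ℝ) * specNorm (bgram A p.1.1 p.1.2)) ⟨(i, j), hij⟩
  rwa [one_div, inv_mul_le_iff₀ (by exact_mod_cast hd)] at hle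

lemma e2norm_bgram_mulVec_le (hd : 0 < d) {i j : Fin L} (hij : i ≠ j) (x : Fin d → ℝ) :
    e2norm (bgram A i j *ᵥ x) ≤ d * blockCoh A * e2norm x :=
  (e2norm_mulVec_le_specNorm_mul _ x).trans
    (mul_le_mul_of_nonneg_right (specNorm_bgram_le_mul_blockCoh A hd hij) (e2norm_nonneg x))

variable {A}

lemma e2norm_bgram_self_sub_one_mulVec_le (hd : 0 < d) {l : Fin L}
    (hA : ∀ j, e2norm (acol A l j) = 1) (x : Fin d → ℝ) :
    e2norm ((bgram A l l - 1) *ᵥ x) ≤ (d - 1) * subCoh A * e2norm x := by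
  have : Nonempty (Fin d) := ⟨⟨0, hd⟩⟩
  have hdiag (a : Fin d) : (bgram A l l - 1) a a = 0 := by
    rw [Matrix.sub_apply, bgram_self_apply_self, hA, one_apply_eq, one_pow, sub_self]
  have hoff (a b : Fin d) (hab : a ≠ b) : |(bgram A l l - 1) a b| ≤ subCoh A := by
    rw [Matrix.sub_apply, one_apply_ne hab, sub_zero]
    exact abs_bgram_self_le_subCoh A l hab
  simpa only [Fintype.card_fin] using
    e2norm_mulVec_le_of_diag_eq_zero (subCoh_nonneg A) hdiag hoff x

lemma e2norm_le_e2norm_blkT_add (hd : 0 < d) {J : Finset (Fin L)} {l : Fin L} (hl : l ∈ J)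
    (hA : ∀ j, e2norm (acol A l j) = 1) (x : Fin L → Fin d → ℝ) :
    e2norm (x l) ≤ e2norm (blkT A l (∑ l' ∈ J, colBlock A l' *ᵥ x l')) +
      (d - 1) * subCoh A * e2norm (x l) + d * blockCoh A * ∑ l' ∈ J.erase l, e2norm (x l') := by
  set w := blkT A l (∑ l' ∈ J, colBlock A l' *ᵥ x l') with hw
  have hx : x l = w - (bgram A l l - 1) *ᵥ x l - ∑ l' ∈ J.erase l, bgram A l l' *ᵥ x l' := by
    rw [hw, blkT_sum_colBlock_mulVec, ← add_sum_erase _ _ hl, sub_mulVec, one_mulVec]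
    abel
  have hcross : e2norm (∑ l' ∈ J.erase l, bgram A l l' *ᵥ x l') ≤
      d * blockCoh A * ∑ l' ∈ J.erase l, e2norm (x l') := by
    rw [mul_sum]
    exact (e2norm_sum_le _ _).trans <| sum_le_sum fun l' hl' ↦
      e2norm_bgram_mulVec_le A hd (ne_of_mem_erase hl').symm (x l')
  calc
    e2norm (x l) ≤ e2norm w + e2norm ((bgram A l l - 1) *ᵥ x l) +
        e2norm (∑ l' ∈ J.erase l, bgram A l l' *ᵥ x l') := by
      conv_lhs => rw [hx]
      exact (e2norm_sub_le _ _).trans (by gcongr; exact e2norm_sub_le _ _)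
    _ ≤ e2norm w + (d - 1) * subCoh A * e2norm (x l) +
        d * blockCoh A * ∑ l' ∈ J.erase l, e2norm (x l') := by
      gcongr
      exact e2norm_bgram_self_sub_one_mulVec_le hd hA (x l)

theorem stmt6_general (hd : 0 < d) (hA : ∀ l j, e2norm (acol A l j) = 1) {J : Finset (Fin L)}
    (hJ : J.Nonempty) (x : Fin L → Fin d → ℝ) :
    (1 - ((d : ℝ) - 1) * subCoh A - ((#J : ℝ) - 1) * d * blockCoh A) *
        (⨆ l : {l : Fin L // l ∈ J}, e2norm (x l.1)) ≤
      ⨆ l : {l : Fin L // l ∈ J}, e2norm (blkT A l.1 (∑ l' ∈ J, colBlock A l' *ᵥ x l')) := by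
  have : Nonempty {l : Fin L // l ∈ J} := hJ.to_subtype
  obtain ⟨⟨l, hl⟩, hmax⟩ :=
    exists_eq_ciSup_of_finite (f := fun l : {l : Fin L // l ∈ J} ↦ e2norm (x l.1))
  have hle (l' : Fin L) (hl' : l' ∈ J) : e2norm (x l') ≤ e2norm (x l) :=
    (Finite.le_ciSup (fun l : {l : Fin L // l ∈ J} ↦ e2norm (x l.1)) ⟨l', hl'⟩).trans_eq hmax.symm
  have hrest : ∑ l' ∈ J.erase l, e2norm (x l') ≤ ((#J : ℝ) - 1) * e2norm (x l) := by
    rw [← cast_card_erase_of_mem hl, ← nsmul_eq_mul]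
    exact sum_le_card_nsmul _ _ _ fun l' hl' ↦ hle l' (mem_of_mem_erase hl')
  rw [← hmax]
  refine Finite.le_ciSup_of_le ⟨l, hl⟩ ?_
  have hblock := e2norm_le_e2norm_blkT_add hd hl (hA l) x
  have hcoh : 0 ≤ d * blockCoh A := mul_nonneg d.cast_nonneg (blockCoh_nonneg A)
  linarith [mul_le_mul_of_nonneg_left hrest hcoh]

end BlockMatrix

/-- **Eq. (29) of the paper.**  For `S ⊆ I1` with `|S| = k < K = |I1|` and
`v = Σ_{l ∈ I1∖S} A_l x̃_l`,
`max_{l ∈ I1} ‖A_lᵀ v‖₂ ≥ (1 - (d-1)ν - (K-k-1)dμ_B) · max_{l ∈ I1∖S} ‖x̃_l‖₂`. -/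
theorem stmt6 {m L d K k : ℕ}
    (hm : m < L * d) (hd : 0 < d)
    (A : Matrix (Fin m) (Fin L × Fin d) ℝ)
    (hA : ∀ l j, e2norm (acol A l j) = 1)
    (μB ν : ℝ) (hμB : μB = blockCoh A) (hν : ν = subCoh A)
    (I1 : Finset (Fin L)) (hcard : I1.card = K) (hKL : K < L)
    (S : Finset (Fin L)) (hS : S ⊆ I1) (hSk : S.card = k) (hk : k < K)
    (xt : Fin L → Fin d → ℝ)
    (v : Fin m → ℝ) (hv : v = fun i => ∑ l ∈ I1 \ S, ∑ j, A i (l, j) * xt l j) :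
    (1 - ((d : ℝ) - 1) * ν - ((K : ℝ) - (k : ℝ) - 1) * d * μB) *
        (⨆ l : {l : Fin L // l ∈ I1 \ S}, e2norm (xt l.1)) ≤
      ⨆ l : {l : Fin L // l ∈ I1}, e2norm (blkT A l.1 v) := by
  subst hμB hν hcard hSk
  have hJ : (I1 \ S).Nonempty := sdiff_nonempty_of_card_lt_card hk
  have : Nonempty {l : Fin L // l ∈ I1 \ S} := hJ.to_subtype
  rw [← cast_card_sdiff hS, hv, ← sum_colBlock_mulVec]
  exact (stmt6_general hd hA hJ xt).trans <|
    ciSup_le fun l ↦ Finite.le_ciSup_of_le ⟨l, sdiff_subset l.2⟩ le_rfl
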